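/- arXiv:1301.1025 — 2 statements merged into one kernel-verified Lean document; each statement's English description precedes it below -/
import Mathlib

section
/- Let f be holomorphic on the open ball B(0,R) ⊂ ℂ with f(0) ≠ 0, let 0 < r < R, and let α₁,…,α_N be the zeros of f in the closed ball of radius r, counted with multiplicity. Then |f(0)| · ∏_{n=1}^N (r/|α_n|) = exp( (1/2π) ∫_{-π}^{π} log|f(re^{iθ})| dθ ). -/
open Metric

/-!
Off finitely many points of the circle, `log ‖f‖ = ∑ log ‖z - αᵢ‖ + log ‖g‖`. The average of
`log ‖z - αᵢ‖` over a circle of radius `r` is `log r` for every `αᵢ` inside or on the circle,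
while `log ‖g‖` is harmonic and averages to its value at the centre. Exponentiating and expressing
`‖g‖` at the centre through `‖f‖` gives the formula.
-/

section Jensen

open Filter Real

theorem circleAverage_eq_intervalIntegral_neg_pi_pi {E : Type*} [NormedAddCommGroup E]
    [NormedSpace ℝ E] (F : ℂ → E) (c : ℂ) (r : ℝ) :
    circleAverage F c r = (2 * π)⁻¹ • ∫ θ in (-π)..π, F (circleMap c r θ) := by
  rw [circleAverage_eq_integral_add (-π),
    intervalIntegral.integral_comp_add_right (fun θ ↦ F (circleMap c r θ)), zero_add,
    show 2 * π + -π = π by ring]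

variable {𝕜 ι : Type*} [NormedField 𝕜] {c : ℂ} {r : ℝ}

theorem circleAverage_log_norm_mul {f g : ℂ → 𝕜} (hr : r ≠ 0)
    (hf : CircleIntegrable (fun z ↦ log ‖f z‖) c r)
    (hg : CircleIntegrable (fun z ↦ log ‖g z‖) c r)
    (hf_ne : ∀ᶠ z in codiscreteWithin (sphere c |r|), f z ≠ 0)
    (hg_ne : ∀ᶠ z in codiscreteWithin (sphere c |r|), g z ≠ 0) :
    circleAverage (fun z ↦ log ‖f z * g z‖) c r =
      circleAverage (fun z ↦ log ‖f z‖) c r + circleAverage (fun z ↦ log ‖g z‖) c r := by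
  rw [← circleAverage_fun_add hf hg]
  refine circleAverage_congr_codiscreteWithin ?_ hr
  filter_upwards [hf_ne, hg_ne] with z hfz hgz
  rw [norm_mul, log_mul (norm_ne_zero_iff.mpr hfz) (norm_ne_zero_iff.mpr hgz)]

theorem circleAverage_log_norm_prod {s : Finset ι} {f : ι → ℂ → 𝕜} (hr : r ≠ 0)
    (hf : ∀ i ∈ s, CircleIntegrable (fun z ↦ log ‖f i z‖) c r)
    (hf_ne : ∀ i ∈ s, ∀ᶠ z in codiscreteWithin (sphere c |r|), f i z ≠ 0) :
    circleAverage (fun z ↦ log ‖∏ i ∈ s, f i z‖) c r =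
      ∑ i ∈ s, circleAverage (fun z ↦ log ‖f i z‖) c r := by
  rw [← circleAverage_fun_sum hf]
  refine circleAverage_congr_codiscreteWithin ?_ hr
  filter_upwards [s.eventually_all.mpr hf_ne] with z hz
  rw [norm_prod, log_prod fun i hi ↦ norm_ne_zero_iff.mpr (hz i hi)]

theorem eventually_codiscreteWithin_sub_ne_zero {G : Type*} [AddGroup G] [TopologicalSpace G]
    [T1Space G] (a : G) (U : Set G) :
    ∀ᶠ z in codiscreteWithin U, z - a ≠ 0 := by
  filter_upwards [compl_finite_mem_codiscreteWithin (Set.finite_singleton a)] with z hz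
  exact sub_ne_zero.mpr hz

variable {s : Finset ι} {α : ι → ℂ} {f g : ℂ → ℂ}

theorem circleAverage_log_norm_prod_sub (hr : r ≠ 0) (hα : ∀ i ∈ s, α i ∈ closedBall c |r|) :
    circleAverage (fun z ↦ log ‖∏ i ∈ s, (z - α i)‖) c r = s.card * log r := by
  rw [circleAverage_log_norm_prod hr (fun i _ ↦ circleIntegrable_log_norm_sub_const r)
      (fun i _ ↦ eventually_codiscreteWithin_sub_ne_zero (α i) _),
    Finset.sum_congr rfl fun i hi ↦ circleAverage_log_norm_sub_const_of_mem_closedBall (hα i hi),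
    Finset.sum_const, nsmul_eq_mul]

theorem circleAverage_log_norm_prod_sub_mul (hr : r ≠ 0)
    (hα : ∀ i ∈ s, α i ∈ closedBall c |r|)
    (hg : AnalyticOnNhd ℂ g (closedBall c |r|)) (hg_ne : ∀ z ∈ closedBall c |r|, g z ≠ 0) :
    circleAverage (fun z ↦ log ‖(∏ i ∈ s, (z - α i)) * g z‖) c r =
      s.card * log r + log ‖g c‖ := by
  have hprod_int : CircleIntegrable (fun z ↦ log ‖∏ i ∈ s, (z - α i)‖) c r :=
    MeromorphicOn.circleIntegrable_log_norm fun z _ ↦ by fun_prop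
  have hg_int : CircleIntegrable (fun z ↦ log ‖g z‖) c r :=
    (hg.mono sphere_subset_closedBall).meromorphicOn.circleIntegrable_log_norm
  have hprod_ne : ∀ᶠ z in codiscreteWithin (sphere c |r|), ∏ i ∈ s, (z - α i) ≠ 0 := by
    simp only [Finset.prod_ne_zero_iff]
    exact s.eventually_all.mpr fun i _ ↦ eventually_codiscreteWithin_sub_ne_zero (α i) _
  have hg_ne_sphere : ∀ᶠ z in codiscreteWithin (sphere c |r|), g z ≠ 0 := by
    filter_upwards [self_mem_codiscreteWithin (sphere c |r|)] with z hz
    exact hg_ne z (sphere_subset_closedBall hz)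
  rw [circleAverage_log_norm_mul hr hprod_int hg_int hprod_ne hg_ne_sphere,
    circleAverage_log_norm_prod_sub hr hα, hg.circleAverage_log_norm_of_ne_zero hg_ne]

theorem norm_mul_prod_div_eq_exp_circleAverage_log_norm (hr : 0 < r)
    (hα : ∀ i ∈ s, α i ∈ closedBall c r)
    (hg : AnalyticOnNhd ℂ g (closedBall c r)) (hg_ne : ∀ z ∈ closedBall c r, g z ≠ 0)
    (hfac : ∀ z ∈ closedBall c r, f z = (∏ i ∈ s, (z - α i)) * g z) (hfc : f c ≠ 0) :
    ‖f c‖ * ∏ i ∈ s, (r / ‖c - α i‖) = exp (circleAverage (fun z ↦ log ‖f z‖) c r) := by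
  have hc : c ∈ closedBall c r := mem_closedBall_self hr.le
  have hprod_ne : ∏ i ∈ s, ‖c - α i‖ ≠ 0 := by
    rw [← norm_prod, norm_ne_zero_iff]
    exact left_ne_zero_of_mul (hfac c hc ▸ hfc)
  have havg : circleAverage (fun z ↦ log ‖f z‖) c r = s.card * log r + log ‖g c‖ := by
    rw [← abs_of_pos hr] at hα hg hg_ne hfac
    rw [← circleAverage_log_norm_prod_sub_mul hr.ne' hα hg hg_ne]
    refine circleAverage_congr_sphere fun z hz ↦ ?_
    simp only [hfac z (sphere_subset_closedBall hz)]
  calc ‖f c‖ * ∏ i ∈ s, (r / ‖c - α i‖)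
      = (∏ i ∈ s, ‖c - α i‖) * ‖g c‖ * (r ^ s.card / ∏ i ∈ s, ‖c - α i‖) := by
        rw [hfac c hc, norm_mul, norm_prod, Finset.prod_div_distrib, Finset.prod_const]
    _ = r ^ s.card * ‖g c‖ := by field_simp
    _ = exp (circleAverage (fun z ↦ log ‖f z‖) c r) := by
        rw [havg, exp_add, exp_nat_mul, exp_log hr, exp_log (norm_pos_iff.mpr (hg_ne c hc))]

end Jensen

/-- Jensen's formula: if `f` is holomorphic on `B(0,R)`, `f(0) ≠ 0`, `0 < r < R`,
and `α₁, …, α_N` are the zeros of `f` in the closed ball of radius `r` counted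
with multiplicity (encoded by a factorization `f z = ∏ (z - αᵢ) · g z` with `g`
holomorphic and nonvanishing on the closed ball of radius `r`), then
`|f 0| ∏ (r/|αᵢ|) = exp((1/2π) ∫_{-π}^{π} log |f(r e^{iθ})| dθ)`. -/
theorem stmt12 (R r : ℝ) (hr : 0 < r) (hrR : r < R)
    (f g : ℂ → ℂ) (N : ℕ) (α : Fin N → ℂ)
    (hf : DifferentiableOn ℂ f (ball (0 : ℂ) R))
    (hg : DifferentiableOn ℂ g (ball (0 : ℂ) R))
    (hα : ∀ i, α i ∈ closedBall (0 : ℂ) r)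
    (hgne : ∀ z ∈ closedBall (0 : ℂ) r, g z ≠ 0)
    (hfac : ∀ z ∈ ball (0 : ℂ) R, f z = (∏ i, (z - α i)) * g z)
    (hf0 : f 0 ≠ 0) :
    ‖f 0‖ * ∏ i, (r / ‖α i‖) =
      Real.exp ((1 / (2 * Real.pi)) *
        ∫ θ in (-Real.pi)..Real.pi,
          Real.log ‖f ((r : ℂ) * Complex.exp (θ * Complex.I))‖) := by
  have hsub : closedBall (0 : ℂ) r ⊆ ball 0 R := closedBall_subset_ball hrR
  have hjensen := norm_mul_prod_div_eq_exp_circleAverage_log_norm (s := Finset.univ) hr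
    (fun i _ ↦ hα i) ((hg.analyticOnNhd isOpen_ball).mono hsub) hgne
    (fun z hz ↦ hfac z (hsub hz)) hf0
  simpa only [circleAverage_eq_intervalIntegral_neg_pi_pi, circleMap_zero, zero_sub, norm_neg,
    smul_eq_mul, one_div] using hjensen
end

section
/- Let γ ∈ ℂ with 0 < Re γ < n. Then the Fourier transform of the tempered distribution |x|^{-γ} on ℝⁿ equals c(γ,n) |ξ|^{γ-n}, where c(γ,n) = 2^{n-γ} π^{n/2} Γ((n-γ)/2)/Γ(γ/2). -/
open MeasureTheory
open scoped RealInnerProductSpace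

/-!
By Euler's integral `Γ(a) r^{-a} = ∫₀^∞ t^{a-1} e^{-tr} dt` with `r = ‖x‖²`, pairing a function with
`‖x‖^{-2a}` is, up to the factor `Γ(a)`, the Mellin transform at `a` of its pairing with the
Gaussians `e^{-t‖x‖²}`. In dimension `d` the Fourier transform exchanges the Gaussian of parameter
`t` with `(π/t)^{d/2}` times the Gaussian of parameter `1/(4t)`, which on the Mellin side is the
reflection `s ↦ d/2 - s`. Applying Euler's integral at `γ/2` to the transform of `φ` and at
`(d-γ)/2` to `φ` gives the formula.
-/

open Set Asymptotics Complex Module Topology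

lemma one_div_ofReal_cpow {r : ℝ} (hr : 0 ≤ r) (a : ℂ) : (1 / (r : ℂ)) ^ a = (r : ℂ) ^ (-a) := by
  rw [one_div, inv_cpow_ofReal_nonneg hr, cpow_neg]

lemma ofReal_sq_cpow {x : ℝ} (hx : 0 ≤ x) (a : ℂ) : ((x ^ 2 : ℝ) : ℂ) ^ a = (x : ℂ) ^ (2 * a) := by
  rw [ofReal_pow, cpow_ofNat_mul'] <;> simp [arg_ofReal_of_nonneg hx, Real.pi_pos, Real.pi_pos.le]

variable {F : Type*} [NormedAddCommGroup F]

section RieszKernel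

variable {E : Type*} [NormedAddCommGroup E] [NormedSpace ℝ E] [FiniteDimensional ℝ E]
  [MeasurableSpace E] [BorelSpace E] {μ : Measure E} [μ.IsAddHaarMeasure] {f : E → F}

theorem integrable_norm_rpow_neg_mul_norm {s : ℝ} (hs : 0 ≤ s) (hd : s < finrank ℝ E)
    (hf : Integrable f μ) (hf₀ : f =O[𝓝 0] (1 : E → ℝ)) :
    Integrable (fun x ↦ ‖x‖ ^ (-s) * ‖f x‖) μ := by
  have hmeas : AEStronglyMeasurable (fun x ↦ ‖x‖ ^ (-s) * ‖f x‖) μ :=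
    (measurable_norm.pow_const _).aestronglyMeasurable.mul hf.norm.aestronglyMeasurable
  obtain ⟨C, hC⟩ := hf₀.bound
  obtain ⟨δ, hδ, hball⟩ := Metric.eventually_nhds_iff_ball.1 hC
  have near : IntegrableOn (fun x ↦ ‖x‖ ^ (-s) * ‖f x‖) (Metric.ball 0 δ) μ := by
    have hdim : 1 ≤ finrank ℝ E := by exact_mod_cast hs.trans_lt hd
    refine integrableOn_ball_of_norm_le_rpow (C := C) hdim hd ?_ hmeas
    filter_upwards [ae_restrict_mem measurableSet_ball] with x hx
    have hfx : ‖f x‖ ≤ C := by simpa using hball x hx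
    rw [Real.norm_of_nonneg (by positivity), mul_comm C]
    gcongr
  have far : IntegrableOn (fun x ↦ ‖x‖ ^ (-s) * ‖f x‖) (Metric.ball 0 δ)ᶜ μ := by
    refine (hf.norm.const_mul (δ ^ (-s))).integrableOn.mono' hmeas.restrict ?_
    filter_upwards [ae_restrict_mem measurableSet_ball.compl] with x hx
    have hδx : δ ≤ ‖x‖ := by simpa using hx
    rw [Real.norm_of_nonneg (by positivity)]
    exact mul_le_mul_of_nonneg_right
      (Real.rpow_le_rpow_of_nonpos hδ hδx (neg_nonpos.2 hs)) (norm_nonneg _)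
  simpa using near.union far

end RieszKernel

variable [NormedSpace ℂ F]

section MellinLaplace

variable {X : Type*} [MeasurableSpace X] {μ : Measure X} {r : X → ℝ} {f : X → F} {a : ℂ}

lemma norm_cpow_mul_exp_neg_mul {t : ℝ} (ht : 0 < t) (a : ℂ) (r : ℝ) :
    ‖(t : ℂ) ^ (a - 1) * exp (-(r * t))‖ = t ^ (a.re - 1) * Real.exp (-(r * t)) := by
  rw [norm_mul, norm_cpow_eq_rpow_re_of_pos ht, sub_re, one_re, norm_exp, neg_re,
    ← ofReal_mul, ofReal_re]

lemma integrableOn_cpow_mul_exp_neg_mul_Ioi (ha : 0 < a.re) {r : ℝ} (hr : 0 < r) :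
    IntegrableOn (fun t : ℝ ↦ (t : ℂ) ^ (a - 1) * exp (-(r * t))) (Ioi 0) := by
  refine .of_integral_ne_zero ?_
  rw [integral_cpow_mul_exp_neg_mul_Ioi ha hr, one_div_ofReal_cpow hr.le]
  exact mul_ne_zero (by simp [cpow_eq_zero_iff, hr.ne']) (Gamma_ne_zero_of_re_pos ha)

lemma integrable_prod_cpow_mul_exp_neg_mul_smul [SFinite μ] (ha : 0 < a.re)
    (hr : AEMeasurable r μ) (hr_pos : ∀ᵐ x ∂μ, 0 < r x) (hf : AEStronglyMeasurable f μ)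
    (hrf : Integrable (fun x ↦ r x ^ (-a.re) * ‖f x‖) μ) :
    Integrable (fun p : X × ℝ ↦ ((p.2 : ℂ) ^ (a - 1) * exp (-(r p.1 * p.2))) • f p.1)
      (μ.prod (volume.restrict (Ioi 0))) := by
  have hmeas : AEStronglyMeasurable
      (fun p : X × ℝ ↦ ((p.2 : ℂ) ^ (a - 1) * exp (-(r p.1 * p.2))) • f p.1)
      (μ.prod (volume.restrict (Ioi 0))) := by
    have : AEMeasurable (fun p : X × ℝ ↦ r p.1) (μ.prod (volume.restrict (Ioi 0))) :=
      hr.comp_fst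
    refine AEStronglyMeasurable.smul (AEMeasurable.aestronglyMeasurable ?_) hf.comp_fst
    fun_prop
  refine (integrable_prod_iff hmeas).2 ⟨?_, ?_⟩
  · filter_upwards [hr_pos] with x hx
    exact (integrableOn_cpow_mul_exp_neg_mul_Ioi ha hx).smul_const (f x)
  · refine (hrf.const_mul (Real.Gamma a.re)).congr ?_
    filter_upwards [hr_pos] with x hx
    have hnorm : ∫ t in Ioi (0 : ℝ), ‖((t : ℂ) ^ (a - 1) * exp (-(r x * t))) • f x‖ =
        ∫ t in Ioi (0 : ℝ), t ^ (a.re - 1) * Real.exp (-(r x * t)) * ‖f x‖ :=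
      setIntegral_congr_fun measurableSet_Ioi fun t ht ↦ by
        rw [norm_smul, norm_cpow_mul_exp_neg_mul ht]
    rw [hnorm, integral_mul_const, Real.integral_rpow_mul_exp_neg_mul_Ioi ha hx, one_div,
      Real.inv_rpow hx.le, ← Real.rpow_neg hx.le]
    ring

theorem mellin_integral_exp_neg_mul_smul [CompleteSpace F] [SFinite μ] (ha : 0 < a.re)
    (hr : AEMeasurable r μ) (hr_pos : ∀ᵐ x ∂μ, 0 < r x) (hf : AEStronglyMeasurable f μ)
    (hrf : Integrable (fun x ↦ r x ^ (-a.re) * ‖f x‖) μ) :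
    mellin (fun t ↦ ∫ x, exp (-(r x * t)) • f x ∂μ) a =
      Gamma a • ∫ x, (r x : ℂ) ^ (-a) • f x ∂μ := by
  calc mellin (fun t ↦ ∫ x, exp (-(r x * t)) • f x ∂μ) a
      = ∫ t in Ioi (0 : ℝ), ∫ x, ((t : ℂ) ^ (a - 1) * exp (-(r x * t))) • f x ∂μ := by
        simp only [mellin, mul_smul, integral_smul]
    _ = ∫ x, (∫ t in Ioi (0 : ℝ), ((t : ℂ) ^ (a - 1) * exp (-(r x * t))) • f x) ∂μ :=
        (integral_integral_swap
          (integrable_prod_cpow_mul_exp_neg_mul_smul ha hr hr_pos hf hrf)).symm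
    _ = ∫ x, Gamma a • (r x : ℂ) ^ (-a) • f x ∂μ := by
        refine integral_congr_ae ?_
        filter_upwards [hr_pos] with x hx
        rw [integral_smul_const, integral_cpow_mul_exp_neg_mul_Ioi ha hx, one_div_ofReal_cpow hx.le,
          smul_smul, mul_comm]
    _ = Gamma a • ∫ x, (r x : ℂ) ^ (-a) • f x ∂μ := integral_smul _ _

end MellinLaplace

theorem mellin_div_cpow_smul_comp_inv_mul {a b : ℝ} (ha : 0 ≤ a) (hb : 0 < b) (f : ℝ → F)
    (k s : ℂ) :
    mellin (fun t ↦ ((a : ℂ) / t) ^ k • f (b * t)⁻¹) s =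
      ((a : ℂ) ^ k * (b : ℂ) ^ (k - s)) • mellin f (k - s) := by
  calc mellin (fun t ↦ ((a : ℂ) / t) ^ k • f (b * t)⁻¹) s
      = mellin (fun t ↦ (a : ℂ) ^ k • (t : ℂ) ^ (-k) • (fun u ↦ f (b⁻¹ * u)) t⁻¹) s :=
        setIntegral_congr_fun measurableSet_Ioi fun t ht ↦ by
          simp only [div_cpow_ofReal_nonneg ha (mem_Ioi.1 ht).le, cpow_neg, mul_inv, smul_smul]
          rw [div_eq_mul_inv]
    _ = (a : ℂ) ^ k • ((b⁻¹ : ℝ) : ℂ) ^ (-(k - s)) • mellin f (k - s) := by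
        rw [mellin_const_smul, mellin_cpow_smul, mellin_comp_inv (fun u ↦ f (b⁻¹ * u)),
          mellin_comp_mul_left _ _ (inv_pos.2 hb), neg_add', sub_neg_eq_add, neg_add_eq_sub]
    _ = ((a : ℂ) ^ k * (b : ℂ) ^ (k - s)) • mellin f (k - s) := by
        rw [smul_smul, ofReal_inv, inv_cpow_ofReal_nonneg hb.le, cpow_neg, inv_inv]

section GaussianPairing

/-- The pairing of `f` with the Gaussian `x ↦ e^{-t‖x‖²}`, as a function of `t`. -/
noncomputable def gaussianPairing {E : Type*} [NormedAddCommGroup E] [MeasurableSpace E]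
    (μ : Measure E) (f : E → F) (t : ℝ) : F :=
  ∫ x, exp (-((‖x‖ ^ 2 : ℝ) * t)) • f x ∂μ

variable {E : Type*} [NormedAddCommGroup E] [NormedSpace ℝ E] [FiniteDimensional ℝ E]
  [MeasurableSpace E] [BorelSpace E] {μ : Measure E} [μ.IsAddHaarMeasure] {f : E → F}

theorem mellin_gaussianPairing [CompleteSpace F] {s : ℂ} (hs : 0 < s.re) (hd : s.re < finrank ℝ E)
    (hf : Integrable f μ) (hf₀ : f =O[𝓝 0] (1 : E → ℝ)) :
    mellin (gaussianPairing μ f) (s / 2) = Gamma (s / 2) • ∫ x, (‖x‖ : ℂ) ^ (-s) • f x ∂μ := by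
  have : Nontrivial E := nontrivial_of_finrank_pos (R := ℝ) (by exact_mod_cast hs.trans hd)
  have hre : (s / 2).re = s.re / 2 := by simp
  have hpos : ∀ᵐ x ∂μ, 0 < ‖x‖ ^ 2 := by
    filter_upwards [Measure.ae_ne μ 0] with x hx
    positivity
  have hint : Integrable (fun x ↦ (‖x‖ ^ 2) ^ (-(s / 2).re) * ‖f x‖) μ := by
    refine (integrable_norm_rpow_neg_mul_norm hs.le hd hf hf₀).congr (.of_forall fun x ↦ ?_)
    dsimp only
    rw [← Real.rpow_natCast_mul (norm_nonneg x), hre]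
    congr 2
    push_cast
    ring
  calc mellin (gaussianPairing μ f) (s / 2)
      = Gamma (s / 2) • ∫ x, ((‖x‖ ^ 2 : ℝ) : ℂ) ^ (-(s / 2)) • f x ∂μ :=
        mellin_integral_exp_neg_mul_smul (by simpa using hs) (by fun_prop) hpos
          hf.aestronglyMeasurable hint
    _ = Gamma (s / 2) • ∫ x, (‖x‖ : ℂ) ^ (-s) • f x ∂μ := by
        simp only [ofReal_sq_cpow (norm_nonneg _), mul_neg, mul_div_cancel₀ s two_ne_zero]

end GaussianPairing

section AngularFourier

variable {V : Type*} [NormedAddCommGroup V] [InnerProductSpace ℝ V] [FiniteDimensional ℝ V]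
  [MeasurableSpace V] [BorelSpace V] {φ : V → F}

/-- The Fourier transform `x ↦ ∫ e^{-i⟪y, x⟫} φ(y) dy` in angular frequency, as opposed to the
normalization `∫ e^{-2πi⟪y, x⟫} φ(y) dy` of `𝓕`. -/
noncomputable def angularFourier (φ : V → F) : V → F :=
  VectorFourier.fourierIntegral Real.probChar volume (innerₗ V) φ

lemma angularFourier_apply (φ : V → F) (x : V) :
    angularFourier φ x = ∫ y, exp (-(I * (⟪y, x⟫ : ℝ))) • φ y := by
  simp only [angularFourier, VectorFourier.fourierIntegral_probChar, innerₗ_apply_apply, neg_mul,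
    mul_comm I]

lemma continuous_angularFourier (hφ : Integrable φ) : Continuous (angularFourier φ) :=
  VectorFourier.fourierIntegral_continuous Real.continuous_probChar continuous_inner hφ

lemma integral_angularFourier_smul [CompleteSpace F] {g : V → ℂ} (hg : Integrable g)
    (hφ : Integrable φ) :
    ∫ x, angularFourier g x • φ x = ∫ x, g x • angularFourier φ x := by
  simpa only [angularFourier, flip_innerₗ] using
    VectorFourier.integral_fourierIntegral_smul_eq_flip Real.continuous_probChar
    (L := innerₗ V) continuous_inner hg hφ

lemma integrable_cexp_neg_sq_norm_mul {b : ℂ} (hb : 0 < b.re) :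
    Integrable fun x : V ↦ exp (-((‖x‖ ^ 2 : ℝ) * b)) := by
  simpa [mul_comm] using GaussianFourier.integrable_cexp_neg_mul_sq_norm_add hb 0 (0 : V)

lemma angularFourier_cexp_neg_sq_norm_mul {b : ℂ} (hb : 0 < b.re) (x : V) :
    angularFourier (fun y : V ↦ exp (-((‖y‖ ^ 2 : ℝ) * b))) x =
      (Real.pi / b) ^ ((finrank ℝ V : ℂ) / 2) * exp (-((‖x‖ ^ 2 : ℝ) * (4 * b)⁻¹)) := by
  calc angularFourier (fun y : V ↦ exp (-((‖y‖ ^ 2 : ℝ) * b))) x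
      = ∫ y : V, exp (-b * ‖y‖ ^ 2 + -I * (⟪x, y⟫ : ℝ)) := by
        rw [angularFourier_apply]
        congr with y
        rw [smul_eq_mul, ← exp_add, real_inner_comm]
        push_cast
        ring_nf
    _ = (Real.pi / b) ^ ((finrank ℝ V : ℂ) / 2) * exp ((-I) ^ 2 * ‖x‖ ^ 2 / (4 * b)) :=
        GaussianFourier.integral_cexp_neg_mul_sq_norm_add hb (-I) x
    _ = (Real.pi / b) ^ ((finrank ℝ V : ℂ) / 2) * exp (-((‖x‖ ^ 2 : ℝ) * (4 * b)⁻¹)) := by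
        rw [neg_sq, I_sq]
        push_cast
        ring_nf

theorem gaussianPairing_angularFourier [CompleteSpace F] (hφ : Integrable φ) {t : ℝ} (ht : 0 < t) :
    gaussianPairing volume (angularFourier φ) t =
      ((Real.pi : ℂ) / t) ^ ((finrank ℝ V : ℂ) / 2) • gaussianPairing volume φ (4 * t)⁻¹ := by
  have ht_re : 0 < (t : ℂ).re := by simpa using ht
  simp only [gaussianPairing, ofReal_inv, ofReal_mul, ofReal_ofNat,
    ← integral_angularFourier_smul (integrable_cexp_neg_sq_norm_mul ht_re) hφ,
    angularFourier_cexp_neg_sq_norm_mul ht_re, mul_smul, integral_smul]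

theorem mellin_gaussianPairing_angularFourier [CompleteSpace F] (hφ : Integrable φ) (s : ℂ) :
    mellin (gaussianPairing volume (angularFourier φ)) (s / 2) =
      ((Real.pi : ℂ) ^ ((finrank ℝ V : ℂ) / 2) * 2 ^ (finrank ℝ V - s)) •
        mellin (gaussianPairing volume φ) ((finrank ℝ V - s) / 2) := by
  calc mellin (gaussianPairing volume (angularFourier φ)) (s / 2)
      = mellin (fun t ↦ ((Real.pi : ℂ) / t) ^ ((finrank ℝ V : ℂ) / 2) •
          gaussianPairing volume φ (2 ^ 2 * t)⁻¹) (s / 2) :=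
        setIntegral_congr_fun measurableSet_Ioi fun t ht ↦ by
          rw [gaussianPairing_angularFourier hφ ht]
          norm_num
    _ = _ := by
        rw [mellin_div_cpow_smul_comp_inv_mul Real.pi_pos.le (by positivity), ← sub_div,
          ofReal_sq_cpow two_pos.le, mul_div_cancel₀ _ two_ne_zero, ofReal_ofNat]

lemma angularFourier_eq_fourier_smul (φ : V → F) (x : V) :
    angularFourier φ x = FourierTransform.fourier φ ((2 * Real.pi)⁻¹ • x) := by
  have hπ : (Real.pi : ℂ) ≠ 0 := ofReal_ne_zero.2 Real.pi_ne_zero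
  rw [angularFourier_apply, Real.fourier_eq']
  congr with y
  congr 2
  rw [inner_smul_right]
  push_cast
  field_simp

lemma integrable_angularFourier_schwartzMap (φ : SchwartzMap V F) :
    Integrable (angularFourier φ) := by
  rw [funext (angularFourier_eq_fourier_smul φ), ← SchwartzMap.fourier_coe]
  exact (FourierTransform.fourier φ).integrable.comp_smul (by positivity)

theorem stmt16_general [CompleteSpace F] {γ : ℂ} (hγ : 0 < γ.re) (hd : γ.re < finrank ℝ V)
    (hφ : Integrable φ) (hφ₀ : φ =O[𝓝 0] (1 : V → ℝ)) (hFφ : Integrable (angularFourier φ)) :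
    ∫ x : V, (‖x‖ : ℂ) ^ (-γ) • angularFourier φ x =
      ((2 : ℂ) ^ ((finrank ℝ V : ℂ) - γ) * (Real.pi : ℂ) ^ ((finrank ℝ V : ℂ) / 2) *
        (Gamma (((finrank ℝ V : ℂ) - γ) / 2) / Gamma (γ / 2))) •
          ∫ ξ : V, (‖ξ‖ : ℂ) ^ (γ - (finrank ℝ V : ℂ)) • φ ξ := by
  have hre : (finrank ℝ V - γ).re = finrank ℝ V - γ.re := by simp
  have hFφ₀ : angularFourier φ =O[𝓝 0] (1 : V → ℝ) :=
    (continuous_angularFourier hφ).continuousAt.isBigO_one ℝ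
  have hΓ : Gamma (γ / 2) ≠ 0 := Gamma_ne_zero_of_re_pos (by simpa using hγ)
  refine smul_right_injective F hΓ ?_
  calc Gamma (γ / 2) • ∫ x : V, (‖x‖ : ℂ) ^ (-γ) • angularFourier φ x
      = mellin (gaussianPairing volume (angularFourier φ)) (γ / 2) :=
        (mellin_gaussianPairing hγ hd hFφ hFφ₀).symm
    _ = ((Real.pi : ℂ) ^ ((finrank ℝ V : ℂ) / 2) * 2 ^ (finrank ℝ V - γ)) •
          mellin (gaussianPairing volume φ) ((finrank ℝ V - γ) / 2) :=
        mellin_gaussianPairing_angularFourier hφ γ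
    _ = ((Real.pi : ℂ) ^ ((finrank ℝ V : ℂ) / 2) * 2 ^ (finrank ℝ V - γ)) •
          Gamma ((finrank ℝ V - γ) / 2) • ∫ ξ : V, (‖ξ‖ : ℂ) ^ (γ - finrank ℝ V) • φ ξ := by
        rw [mellin_gaussianPairing (by linarith) (by linarith) hφ hφ₀, neg_sub]
    _ = _ := by
        simp only [smul_smul]
        congr 1
        field_simp

end AngularFourier

/-- For `0 < Re γ < n`, the Fourier transform (with convention
`Fφ(ξ) = ∫ φ(x) e^{-i⟨x,ξ⟩} dx`) of the tempered distribution `|x|^{-γ}` on `ℝⁿ`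
is `2^{n-γ} π^{n/2} (Γ((n-γ)/2)/Γ(γ/2)) |ξ|^{γ-n}`, in the sense of the pairing
against Schwartz functions. -/
theorem stmt16 (n : ℕ) (γ : ℂ) (h0 : 0 < γ.re) (hn : γ.re < n)
    (φ : SchwartzMap (EuclideanSpace ℝ (Fin n)) ℂ) :
    ∫ x : EuclideanSpace ℝ (Fin n),
        (‖x‖ : ℂ) ^ (-γ) *
          ∫ y : EuclideanSpace ℝ (Fin n),
            φ y * Complex.exp (-(Complex.I * (⟪y, x⟫ : ℝ)))
      = (2 : ℂ) ^ ((n : ℂ) - γ) * (Real.pi : ℂ) ^ ((n : ℂ) / 2) *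
          (Complex.Gamma (((n : ℂ) - γ) / 2) / Complex.Gamma (γ / 2)) *
          ∫ ξ : EuclideanSpace ℝ (Fin n), (‖ξ‖ : ℂ) ^ (γ - (n : ℂ)) * φ ξ := by
  simpa only [angularFourier_apply, smul_eq_mul, finrank_euclideanSpace_fin, mul_comm (exp _)]
    using stmt16_general h0 (by simpa using hn) φ.integrable
      (φ.continuous.continuousAt.isBigO_one ℝ) (integrable_angularFourier_schwartzMap φ)
end
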